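/- arXiv:2212.10069 — 2 statements merged into one kernel-verified Lean document; each statement's English description precedes it below -/
import Mathlib

section
/- Let f be the infinite Fibonacci sequence. If N ≥ 1 and n ≥ 1, then the set of factors of f of length n with all letters ≤ N equals the set of factors of the finite word τ^{N+1}(0) of length n with all letters ≤ N, i.e. F_f(n,N) = F_{τ^{N+1}(0)}(n,N). -/
/-!
Write `W k = τ^k(0)`. Since `τ` commutes with the shift of letters `x ↦ x + 2`, the words satisfy
the recursion `W (k + 2) = W (k + 1) · (W k + 2)` (`fibWord_add_two`). In particular every `W k` is
a prefix of all later ones, and `W k` ends with the letter `k` (`fibWord_last`).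

Let `v` be a nonempty factor of `W (k + 2)` with letters `≤ N`, where `k ≥ N`. The last letter
`k + 1 > N` of the block `W (k + 1)` does not occur in `v`, so `v` lies in `W (k + 1)`, which is
handled by induction, or in `W k + 2`. In the latter case `N ≥ 2` and `v = v' + 2` with `v'` a
factor of `W k` with letters `≤ N - 2`; by induction `v'` is a factor of `W (N - 1)`, so `v` is a
factor of the suffix `W (N - 1) + 2` of `W (N + 1)` (`infix_fibWord`). As every factor of the
infinite sequence is a factor of some `W m`, the theorem follows.
-/

/-- Number of occurrences of `w` as a contiguous factor of `y`
(number of starting positions `0 ≤ i ≤ |y|-1` where `w` occurs). -/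
def occ (w y : List ℕ) : ℕ :=
  ((List.range y.length).filter (fun i => w.isPrefixOf (y.drop i))).length

/-- Base-`k` representation of `m`, most significant digit first, with `(0)_k = 0`. -/
def rep (k m : ℕ) : List ℕ := if m = 0 then [0] else (Nat.digits k m).reverse

/-- The `(k,w)`-digital sequence: number of occurrences of `w` in `(m)_k`. -/
def dseq (k : ℕ) (w : List ℕ) (m : ℕ) : ℕ := occ w (rep k m)

/-- The set of factors of length `n` of the sequence `a` all of whose letters are `≤ N`. -/
def factorSet (a : ℕ → ℕ) (n N : ℕ) : Set (List ℕ) :=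
  { u | (∃ i, u = (List.range n).map fun j => a (i + j)) ∧ ∀ x ∈ u, x ≤ N }

/-- The `N`-factor complexity `P_a(n,N)`. -/
noncomputable def Pc (a : ℕ → ℕ) (n N : ℕ) : ℕ := Nat.card (factorSet a n N)

/-- `F_a^{(1)}(n,N) = F_a(n,N) \ F_a(n,N-1)`. -/
def factorSet1 (a : ℕ → ℕ) (n N : ℕ) : Set (List ℕ) :=
  factorSet a n N \ factorSet a n (N - 1)

/-- First difference of the `N`-factor complexity in the variable `N`. -/
noncomputable def Pc1 (a : ℕ → ℕ) (n N : ℕ) : ℤ := (Pc a n N : ℤ) - (Pc a n (N - 1) : ℤ)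

/-- Second difference of the `N`-factor complexity in the variable `N`. -/
noncomputable def Pc2 (a : ℕ → ℕ) (n N : ℕ) : ℤ := Pc1 a n N - Pc1 a n (N - 1)

/-- The morphism `τ` on single letters: `τ(2i) = (2i)(2i+1)`, `τ(2i+1) = (2i+2)`. -/
def tauLetter (m : ℕ) : List ℕ := if m % 2 = 0 then [m, m + 1] else [m + 1]

/-- The morphism `τ` extended to finite words by concatenation. -/
def tauWord (u : List ℕ) : List ℕ := u.flatMap tauLetter

/-- Fibonacci numbers with `F_0 = F_1 = 1`. -/
def fibW : ℕ → ℕ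
  | 0 => 1
  | 1 => 1
  | n + 2 => fibW (n + 1) + fibW n

/-- `φ(n) = max {k : F_k < n}`. -/
noncomputable def phi (n : ℕ) : ℕ := sSup {k | fibW k < n}

/-- The infinite Fibonacci sequence `f = τ^∞(0)`: since `τ^{p}(0)` is a prefix of
`τ^{p+1}(0)` and `|τ^{n+1}(0)| = F_{n+2} > n`, the `n`-th letter of the fixed point is
the `n`-th letter of `τ^{n+1}(0)`. -/
def fibSeq (n : ℕ) : ℕ := (tauWord^[n + 1] [0]).getD n 0

/-- The set of factors of length `n` of a finite word `u` all of whose letters are `≤ N`. -/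
def factorSetW (u : List ℕ) (n N : ℕ) : Set (List ℕ) :=
  { v | v.length = n ∧ v <:+: u ∧ ∀ x ∈ v, x ≤ N }

/-- The finite word `τ^k(0)`. -/
def fibWord (k : ℕ) : List ℕ := tauWord^[k] [0]

lemma fibWord_succ (k : ℕ) : fibWord (k + 1) = tauWord (fibWord k) :=
  Function.iterate_succ_apply' _ _ _

lemma tauWord_append (u v : List ℕ) : tauWord (u ++ v) = tauWord u ++ tauWord v := by
  simp [tauWord]

lemma tauWord_shift (u : List ℕ) : tauWord (u.map (· + 2)) = (tauWord u).map (· + 2) := by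
  induction u with
  | nil => rfl
  | cons a u ih =>
    have h : tauLetter (a + 2) = (tauLetter a).map (· + 2) := by
      unfold tauLetter
      rw [Nat.add_mod_right]
      split_ifs <;> simp
    simp only [tauWord, List.map_cons, List.flatMap_cons, List.map_append] at ih ⊢
    rw [ih, h]

lemma fibWord_add_two (k : ℕ) :
    fibWord (k + 2) = fibWord (k + 1) ++ (fibWord k).map (· + 2) := by
  induction k with
  | zero => rfl
  | succ k ih =>
    rw [fibWord_succ (k + 2), ih, tauWord_append, tauWord_shift, ← fibWord_succ, ← fibWord_succ,
      ih]

lemma fibWord_last (k : ℕ) : ∃ u, fibWord k = u ++ [k] := by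
  induction k using Nat.twoStepInduction with
  | zero => exact ⟨[], rfl⟩
  | one => exact ⟨[0], rfl⟩
  | more k ih _ =>
    obtain ⟨u, hu⟩ := ih
    refine ⟨fibWord (k + 1) ++ u.map (· + 2), ?_⟩
    rw [fibWord_add_two, hu]
    simp

lemma fibWord_prefix_succ (k : ℕ) : fibWord k <+: fibWord (k + 1) := by
  cases k with
  | zero => exact ⟨[1], rfl⟩
  | succ k => exact ⟨_, (fibWord_add_two k).symm⟩

lemma fibWord_prefix {k m : ℕ} (h : k ≤ m) : fibWord k <+: fibWord m := by
  induction m, h using Nat.le_induction with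
  | base => exact List.prefix_rfl
  | succ m _ ih => exact ih.trans (fibWord_prefix_succ m)

lemma lt_length_fibWord (k : ℕ) : k < (fibWord k).length := by
  induction k using Nat.twoStepInduction with
  | zero => simp [fibWord]
  | one => decide
  | more k ih ih' =>
    rw [fibWord_add_two, List.length_append, List.length_map]
    omega

lemma fibSeq_eq {i m : ℕ} (h : i < (fibWord m).length) : fibSeq i = (fibWord m)[i] := by
  have hi : i < (fibWord (i + 1)).length := by
    have := lt_length_fibWord (i + 1)
    omega
  have e : fibSeq i = (fibWord (i + 1))[i] := List.getD_eq_getElem _ _ hi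
  rw [e]
  rcases le_total (i + 1) m with hm | hm
  · exact (fibWord_prefix hm).getElem hi
  · exact ((fibWord_prefix hm).getElem h).symm

/-- A factor of `u · a · w` that avoids the letter `a` cannot straddle it. -/
lemma infix_of_not_mem {v u w : List ℕ} {a : ℕ} (h : v <:+: u ++ a :: w) (ha : a ∉ v) :
    v <:+: u ∨ v <:+: w := by
  obtain ⟨s, t, h⟩ := h
  rcases List.append_eq_append_iff.1 h with ⟨c, hc, -⟩ | ⟨c, hc, ht⟩
  · exact Or.inl ⟨s, c, hc.symm⟩
  · cases c with
    | nil => exact Or.inl ⟨s, [], by simpa using hc⟩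
    | cons b c =>
      obtain ⟨rfl, rfl⟩ := List.cons.inj ht
      -- Here `s · v = u · a · c`, and `a` falls inside `s` because `a ∉ v`.
      rcases List.append_eq_append_iff.1 hc with ⟨d, -, hd⟩ | ⟨d, -, hd⟩
      · exact absurd (by simp [hd]) ha
      · cases d with
        | nil => exact absurd (by simp at hd; simp [← hd]) ha
        | cons b d =>
          obtain ⟨-, rfl⟩ := List.cons.inj hd
          exact Or.inr ⟨d, t, rfl⟩

/-- Every nonempty factor with letters `≤ N` of a later word `τ^m(0)` already occurs in
`τ^{N+1}(0)`. -/
lemma infix_fibWord (m : ℕ) : ∀ N, N + 1 ≤ m → ∀ v : List ℕ, v ≠ [] → v <:+: fibWord m →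
    (∀ x ∈ v, x ≤ N) → v <:+: fibWord (N + 1) := by
  induction m using Nat.strong_induction_on with
  | _ m ih =>
    intro N hm v hv hvm hN
    rcases hm.eq_or_lt with rfl | hlt
    · exact hvm
    obtain ⟨k, rfl⟩ : ∃ k, m = k + 2 := ⟨m - 2, by omega⟩
    obtain ⟨u, hu⟩ := fibWord_last (k + 1)
    have hvm' := hvm
    rw [fibWord_add_two, hu, List.append_assoc, List.singleton_append] at hvm'
    have hk : k + 1 ∉ v := fun h => by
      have := hN _ h
      omega
    rcases infix_of_not_mem hvm' hk with h | h
    · refine ih (k + 1) (by omega) N (by omega) v hv (h.trans ?_) hN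
      rw [hu]
      exact (List.prefix_append _ _).isInfix
    · obtain ⟨v', hv', rfl⟩ := List.infix_map_iff.1 h
      obtain ⟨x, hx⟩ := List.exists_mem_of_ne_nil _ hv
      obtain ⟨y, -, rfl⟩ := List.mem_map.1 hx
      obtain ⟨M, rfl⟩ : ∃ M, N = M + 2 := ⟨N - 2, by have := hN _ hx; omega⟩
      have h1 := ih k (by omega) M (by omega) v' (by simpa using hv) hv' fun z hz => by
        have := hN (z + 2) (List.mem_map_of_mem hz)
        omega
      rw [fibWord_add_two (M + 1)]
      exact (h1.map _).trans (List.suffix_append _ _).isInfix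

theorem stmt7 (n N : ℕ) (hn : 1 ≤ n) (hN : 1 ≤ N) :
    factorSet fibSeq n N = factorSetW (tauWord^[N + 1] [0]) n N := by
  change _ = factorSetW (fibWord (N + 1)) n N
  ext v
  constructor
  · rintro ⟨⟨i, hi⟩, hv⟩
    have hlen : v.length = n := by simp [hi]
    refine ⟨hlen, ?_, hv⟩
    have hm := lt_length_fibWord (i + n + N + 1)
    refine infix_fibWord (i + n + N + 1) N (by omega) v ?_ ?_ hv
    · rintro rfl
      simp at hlen
      omega
    · have e : v = ((fibWord (i + n + N + 1)).drop i).take n := by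
        apply List.ext_getElem
        · rw [hlen, List.length_take, List.length_drop]
          omega
        · intro j h1 h2
          rw [hlen] at h1
          simp only [hi, List.getElem_map, List.getElem_range, List.getElem_take,
            List.getElem_drop]
          exact fibSeq_eq (by omega)
      rw [e]
      exact (List.take_prefix _ _).isInfix.trans (List.drop_suffix _ _).isInfix
  · rintro ⟨hlen, ⟨s, t, h⟩, hv⟩
    refine ⟨⟨s.length, ?_⟩, hv⟩
    apply List.ext_getElem
    · simp [hlen]
    · intro j h1 h2
      have hl := congrArg List.length h
      simp only [List.length_append] at hl
      simp only [List.getElem_map, List.getElem_range]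
      rw [fibSeq_eq (m := N + 1) (by omega)]
      simp [← h, h1]
end

section
/- Let k = 2 and w = 1, let s = s_{2,1}, and let n ≥ 1. Then for all N ≥ ⌈log_2(n)⌉ + 2, P_s^{(2)}(n,N) = n − 1. -/
/-! ### The binary digit sum -/

lemma occ_one_eq_count (y : List ℕ) : occ [1] y = y.count 1 := by
  induction y with
  | nil => simp [occ]
  | cons a t ih =>
    unfold occ at ih ⊢
    rw [List.length_cons, List.range_succ_eq_map, List.filter_cons, List.filter_map,
      List.count_cons]
    have h : ((fun i => [1].isPrefixOf ((a :: t).drop i)) ∘ Nat.succ)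
        = fun i => [1].isPrefixOf (t.drop i) := by
      funext i; simp
    rw [h]
    by_cases ha : a = 1
    · subst ha
      simp [List.isPrefixOf, ← ih]
    · have ha' : ¬ (1 = a) := fun h => ha h.symm
      simp [List.isPrefixOf, ← ih, ha, ha']

lemma dseq_eq_count (m : ℕ) : dseq 2 [1] m = (Nat.digits 2 m).count 1 := by
  unfold dseq
  rw [occ_one_eq_count]
  unfold rep
  split_ifs with h
  · subst h; simp
  · simp

lemma dseq_zero : dseq 2 [1] 0 = 0 := by simp [dseq_eq_count]

lemma dseq_even (m : ℕ) : dseq 2 [1] (2 * m) = dseq 2 [1] m := by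
  rcases Nat.eq_zero_or_pos m with rfl | hm
  · simp
  · rw [dseq_eq_count, dseq_eq_count, Nat.digits_def' (by norm_num) (by omega)]
    simp

lemma dseq_odd (m : ℕ) : dseq 2 [1] (2 * m + 1) = dseq 2 [1] m + 1 := by
  rw [dseq_eq_count, dseq_eq_count, Nat.digits_def' (by norm_num) (by omega)]
  have h1 : (2 * m + 1) % 2 = 1 := by omega
  have h2 : (2 * m + 1) / 2 = m := by omega
  rw [h1, h2]
  simp

lemma dseq_two_pow_add (L : ℕ) :
    ∀ r < 2 ^ L, dseq 2 [1] (2 ^ L + r) = dseq 2 [1] r + 1 := by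
  induction L with
  | zero =>
    intro r hr
    obtain rfl : r = 0 := by simpa using hr
    simpa using dseq_odd 0
  | succ L ih =>
    intro r hr
    rw [pow_succ] at hr ⊢
    obtain ⟨q, rfl | rfl⟩ := Nat.even_or_odd' r
    · have h : 2 ^ L * 2 + 2 * q = 2 * (2 ^ L + q) := by ring
      rw [h, dseq_even, dseq_even, ih q (by omega)]
    · have h : 2 ^ L * 2 + (2 * q + 1) = 2 * (2 ^ L + q) + 1 := by ring
      rw [h, dseq_odd, dseq_odd, ih q (by omega)]

lemma dseq_eq_zero {m : ℕ} (h : dseq 2 [1] m = 0) : m = 0 := by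
  by_contra hm
  have h1 := Nat.pow_log_le_self 2 hm
  have h2 := Nat.lt_pow_succ_log_self (b := 2) (by norm_num) m
  rw [pow_succ] at h2
  obtain ⟨r, hr⟩ := Nat.exists_eq_add_of_le h1
  have h3 := dseq_two_pow_add (Nat.log 2 m) r (by omega)
  rw [← hr] at h3
  omega

lemma dseq_le (L : ℕ) : ∀ m < 2 ^ L, dseq 2 [1] m ≤ L := by
  induction L with
  | zero =>
    intro m hm
    obtain rfl : m = 0 := by simpa using hm
    simp [dseq_zero]
  | succ L ih =>
    intro m hm
    rw [pow_succ] at hm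
    obtain ⟨q, rfl | rfl⟩ := Nat.even_or_odd' m
    · have := ih q (by omega); rw [dseq_even]; omega
    · have := ih q (by omega); rw [dseq_odd]; omega

lemma dseq_lt (L : ℕ) : ∀ m, m + 1 < 2 ^ L → dseq 2 [1] m < L := by
  induction L with
  | zero => intro m hm; simp at hm
  | succ L ih =>
    intro m hm
    rw [pow_succ] at hm
    obtain ⟨q, rfl | rfl⟩ := Nat.even_or_odd' m
    · have := dseq_le L q (by omega); rw [dseq_even]; omega
    · have := ih q (by omega); rw [dseq_odd]; omega

lemma dseq_two_pow_sub_one (L : ℕ) : dseq 2 [1] (2 ^ L - 1) = L := by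
  induction L with
  | zero => simp [dseq_zero]
  | succ L ih =>
    have hp : 0 < 2 ^ L := by positivity
    have h : 2 ^ (L + 1) - 1 = 2 * (2 ^ L - 1) + 1 := by rw [pow_succ]; omega
    rw [h, dseq_odd, ih]

/-! ### Windows -/

/-- The factor of length `n` at position `i` of the binary digit sum sequence. -/
def window (n i : ℕ) : List ℕ := (List.range n).map fun j => dseq 2 [1] (i + j)

lemma window_eq_iff {n i i' : ℕ} :
    window n i = window n i' ↔ ∀ j < n, dseq 2 [1] (i + j) = dseq 2 [1] (i' + j) := by
  simp [window]

lemma window_eq_map_succ_iff {n i i' : ℕ} :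
    window n i = (window n i').map Nat.succ ↔
      ∀ j < n, dseq 2 [1] (i + j) = dseq 2 [1] (i' + j) + 1 := by
  simp [window]

/-- The factors of length `n` whose maximal letter is `N`. -/
def maxWindows (n N : ℕ) : Set (List ℕ) :=
  {u | ∃ i, u = window n i ∧ (∀ j < n, dseq 2 [1] (i + j) ≤ N) ∧
    ∃ j < n, dseq 2 [1] (i + j) = N}

lemma finite_factorSet (a : ℕ → ℕ) (n N : ℕ) : (factorSet a n N).Finite := by
  refine (Set.finite_range
    (fun f : Fin n → Fin (N + 1) => List.ofFn fun j => (f j : ℕ))).subset ?_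
  rintro u ⟨⟨i, rfl⟩, h⟩
  have h' : ∀ j < n, a (i + j) ≤ N := by
    intro j hj
    exact h _ (List.mem_map.2 ⟨j, List.mem_range.2 hj, rfl⟩)
  refine ⟨fun j => ⟨a (i + j), Nat.lt_succ_of_le (h' j j.2)⟩, ?_⟩
  apply List.ext_getElem <;> simp

lemma maxWindows_eq (n N : ℕ) (hN : 1 ≤ N) :
    maxWindows n N = factorSet1 (dseq 2 [1]) n N := by
  ext u
  constructor
  · rintro ⟨i, rfl, h, j, hj, hjN⟩
    refine ⟨⟨⟨i, rfl⟩, by simpa [window] using h⟩, ?_⟩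
    rintro ⟨-, h'⟩
    have := h' (dseq 2 [1] (i + j)) (List.mem_map.2 ⟨j, List.mem_range.2 hj, rfl⟩)
    omega
  · rintro ⟨⟨⟨i, rfl⟩, h⟩, h'⟩
    have hle : ∀ j < n, dseq 2 [1] (i + j) ≤ N := by simpa using h
    refine ⟨i, rfl, hle, ?_⟩
    by_contra hc
    push Not at hc
    refine h' ⟨⟨i, rfl⟩, ?_⟩
    simp only [List.mem_map, List.mem_range]
    rintro x ⟨j, hj, rfl⟩
    have h1 := hle j hj
    have h2 := hc j hj
    omega

lemma finite_maxWindows (n N : ℕ) (hN : 1 ≤ N) : (maxWindows n N).Finite := by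
  rw [maxWindows_eq n N hN]
  exact (finite_factorSet _ n N).subset Set.sdiff_subset

lemma pc1_eq_ncard (n N : ℕ) (hN : 1 ≤ N) :
    Pc1 (dseq 2 [1]) n N = ((maxWindows n N).ncard : ℤ) := by
  have hsub : factorSet (dseq 2 [1]) n (N - 1) ⊆ factorSet (dseq 2 [1]) n N := by
    rintro u ⟨hu, h⟩
    exact ⟨hu, fun x hx => (h x hx).trans (Nat.sub_le _ _)⟩
  have h := Set.ncard_sdiff_add_ncard_of_subset hsub (finite_factorSet _ n N)
  rw [maxWindows_eq n N hN]
  simp only [Pc1, Pc, factorSet1, Nat.card_coe_set_eq]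
  omega

/-! ### New windows -/

/-- Adding a large power of two to the position adds `1` to every letter. -/
lemma exists_shift_up (n i : ℕ) : ∃ i', window n i' = (window n i).map Nat.succ := by
  refine ⟨2 ^ (i + n) + i, window_eq_map_succ_iff.2 fun j hj => ?_⟩
  rw [add_assoc]
  exact dseq_two_pow_add _ _ (lt_of_lt_of_le (by omega) Nat.lt_two_pow_self.le)

/-- A position `m` in the dyadic block of `2 ^ L` that belongs to a window starting before `2 ^ L`
exceeds `2 ^ L` by less than `n`, so its letter is at most `Nat.clog 2 n + 1`. -/
lemma dseq_lt_of_straddle {n N L m : ℕ} (hN : Nat.clog 2 n + 2 ≤ N)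
    (h1 : 2 ^ L ≤ m) (h2 : m < 2 ^ L + n - 1) (h3 : m < 2 ^ (L + 1)) :
    dseq 2 [1] m < N := by
  obtain ⟨r, rfl⟩ := Nat.exists_eq_add_of_le h1
  rw [pow_succ] at h3
  rw [dseq_two_pow_add L r (by omega)]
  have hn : n ≤ 2 ^ Nat.clog 2 n := Nat.le_pow_clog (by norm_num) n
  have := dseq_le (Nat.clog 2 n) r (by omega)
  omega

/-- A window with maximum `N` is the translate by `1` of another window, or straddles `2 ^ N`. -/
lemma reducible_or_straddle {n N i : ℕ} (hN : Nat.clog 2 n + 2 ≤ N)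
    (hle : ∀ j < n, dseq 2 [1] (i + j) ≤ N) (hex : ∃ j < n, dseq 2 [1] (i + j) = N) :
    (∃ i', window n i = (window n i').map Nat.succ) ∨ (i < 2 ^ N ∧ 2 ^ N < i + n) := by
  obtain ⟨j, hj, hjN⟩ := hex
  -- `2 ^ L` is the leading power of the last position `i + n - 1`.
  have hlast : i + n - 1 ≠ 0 := by
    intro h
    have h0 : i + j = 0 := by omega
    rw [h0, dseq_zero] at hjN
    omega
  obtain ⟨L, h1, h2⟩ : ∃ L, 2 ^ L ≤ i + n - 1 ∧ i + n - 1 < 2 ^ (L + 1) :=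
    ⟨Nat.log 2 (i + n - 1), Nat.pow_log_le_self 2 hlast,
      Nat.lt_pow_succ_log_self (by norm_num) _⟩
  by_cases hi : 2 ^ L ≤ i
  · left
    obtain ⟨r, rfl⟩ := Nat.exists_eq_add_of_le hi
    refine ⟨r, window_eq_map_succ_iff.2 fun t ht => ?_⟩
    rw [add_assoc]
    rw [pow_succ] at h2
    exact dseq_two_pow_add L _ (by omega)
  · right
    push Not at hi
    have hLN : L ≤ N := by
      have h := hle (2 ^ L - 1 - i) (by omega)
      rwa [show i + (2 ^ L - 1 - i) = 2 ^ L - 1 by omega, dseq_two_pow_sub_one] at h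
    have hNL : N ≤ L := by
      by_cases hjL : i + j < 2 ^ L
      · have := dseq_le L _ hjL
        omega
      · have := dseq_lt_of_straddle (n := n) hN (not_lt.1 hjL) (by omega) (by omega)
        omega
    have hLeq : L = N := le_antisymm hLN hNL
    rw [← hLeq]
    exact ⟨hi, by omega⟩

lemma le_two_pow_of_clog {n N : ℕ} (hN : Nat.clog 2 n + 2 ≤ N) : n ≤ 2 ^ N :=
  (Nat.le_pow_clog (by norm_num) n).trans (Nat.pow_le_pow_right (by norm_num) (by omega))

lemma maxWindows_decomp {n N : ℕ} (hN : Nat.clog 2 n + 2 ≤ N) :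
    maxWindows n N = (List.map Nat.succ '' maxWindows n (N - 1)) ∪
      ((fun l => window n (2 ^ N - l)) '' Set.Ico 1 n) := by
  have hnN := le_two_pow_of_clog hN
  ext u
  constructor
  · rintro ⟨i, rfl, hle, hex⟩
    rcases reducible_or_straddle hN hle hex with ⟨i', hi'⟩ | ⟨h1, h2⟩
    · left
      refine ⟨window n i', ⟨i', rfl, ?_, ?_⟩, hi'.symm⟩
      · intro j hj
        have h3 := window_eq_map_succ_iff.1 hi' j hj
        have h4 := hle j hj
        omega
      · obtain ⟨j, hj, hjN⟩ := hex
        have h3 := window_eq_map_succ_iff.1 hi' j hj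
        exact ⟨j, hj, by omega⟩
    · right
      refine ⟨2 ^ N - i, ⟨by omega, by omega⟩, ?_⟩
      simp only
      rw [show 2 ^ N - (2 ^ N - i) = i by omega]
  · rintro (⟨v, ⟨i, rfl, hle, j, hj, hjN⟩, rfl⟩ | ⟨l, ⟨hl1, hl2⟩, rfl⟩)
    · obtain ⟨i', hi'⟩ := exists_shift_up n i
      have h3 := window_eq_map_succ_iff.1 hi'
      refine ⟨i', hi'.symm, ?_, j, hj, ?_⟩
      · intro t ht
        have h4 := hle t ht
        have h5 := h3 t ht
        omega
      · have h5 := h3 j hj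
        omega
    · refine ⟨2 ^ N - l, rfl, ?_, l - 1, by omega, ?_⟩
      · intro j hj
        by_cases hjl : 2 ^ N - l + j < 2 ^ N
        · exact dseq_le N _ hjl
        · refine (dseq_lt_of_straddle (n := n) hN (not_lt.1 hjl) (by omega) ?_).le
          rw [pow_succ]
          omega
      · rw [show 2 ^ N - l + (l - 1) = 2 ^ N - 1 by omega, dseq_two_pow_sub_one]

lemma straddle_injOn {n N : ℕ} (hN : Nat.clog 2 n + 2 ≤ N) :
    Set.InjOn (fun l => window n (2 ^ N - l)) (Set.Ico 1 n) := by
  have hnN := le_two_pow_of_clog hN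
  have key : ∀ l l', 1 ≤ l → l < l' → l' < n → window n (2 ^ N - l) ≠ window n (2 ^ N - l') := by
    intro l l' h1 h2 h3 h
    -- At index `l - 1` the first window has the letter `N`, the second a smaller one.
    have h4 := window_eq_iff.1 h (l - 1) (by omega)
    rw [show 2 ^ N - l + (l - 1) = 2 ^ N - 1 by omega, dseq_two_pow_sub_one] at h4
    have h5 := dseq_lt N (2 ^ N - l' + (l - 1)) (by omega)
    omega
  rintro l ⟨hl1, hl2⟩ l' ⟨hl1', hl2'⟩ h
  rcases lt_trichotomy l l' with hlt | heq | hgt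
  · exact absurd h (key l l' hl1 hlt hl2')
  · exact heq
  · exact absurd h.symm (key l' l hl1' hgt hl2)

lemma disjoint_straddle {n N : ℕ} (hN : Nat.clog 2 n + 2 ≤ N) :
    Disjoint (List.map Nat.succ '' maxWindows n (N - 1))
      ((fun l => window n (2 ^ N - l)) '' Set.Ico 1 n) := by
  have hnN := le_two_pow_of_clog hN
  rw [Set.disjoint_left]
  rintro u ⟨v, ⟨i, rfl, -, -⟩, rfl⟩ ⟨l, ⟨hl1, hl2⟩, h⟩
  have h1 := window_eq_map_succ_iff.1 h l hl2
  have h2 := dseq_two_pow_add N 0 (by positivity)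
  rw [show 2 ^ N - l + l = 2 ^ N + 0 by omega, h2, dseq_zero] at h1
  have h3 := dseq_eq_zero (m := i + l) (by omega)
  omega

lemma ncard_maxWindows {n N : ℕ} (hN : Nat.clog 2 n + 2 ≤ N) :
    (maxWindows n N).ncard = (maxWindows n (N - 1)).ncard + (n - 1) := by
  rw [maxWindows_decomp hN, Set.ncard_union_eq (disjoint_straddle hN)
    ((finite_maxWindows n (N - 1) (by omega)).image _) ((Set.finite_Ico 1 n).image _),
    Set.ncard_image_of_injective _ (List.map_injective_iff.2 Nat.succ_injective),
    (straddle_injOn hN).ncard_image]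
  congr 1
  rw [← Finset.coe_Ico, Set.ncard_coe_finset, Nat.card_Ico]

theorem stmt9 (n : ℕ) (hn : 1 ≤ n) (N : ℕ) (hN : Nat.clog 2 n + 2 ≤ N) :
    Pc2 (dseq 2 [1]) n N = (n : ℤ) - 1 := by
  unfold Pc2
  rw [pc1_eq_ncard n N (by omega), pc1_eq_ncard n (N - 1) (by omega), ncard_maxWindows hN]
  omega
end
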